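/- arXiv:1510.02145 — 3 statements merged into one kernel-verified Lean document; each statement's English description precedes it below -/
import Mathlib

section
/- Let F : ℝⁿ × ℝᵐ → ℝ be twice continuously differentiable with nonempty saddle set Saddle(F). If F is globally jointly strongly quasiconvex-quasiconcave and the mixed second-derivative map ∇ₓ_z F is constant on ℝⁿ × ℝᵐ, then Saddle(F) is globally asymptotically stable under the saddle-point dynamics ẋ = -∇ₓF(x,z), ż = ∇_zF(x,z), and every trajectory converges to a single point of Saddle(F). -/
open Metric Filter Topology Set

noncomputable section

/-- Euclidean space `ℝⁿ`. -/
abbrev En (n : ℕ) : Type := EuclideanSpace ℝ (Fin n)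

variable {n m : ℕ}

/-- Partial gradient of `F` in the first (x) variable. -/
def gradX (F : En n × En m → ℝ) (p : En n × En m) : En n :=
  gradient (fun x => F (x, p.2)) p.1

/-- Partial gradient of `F` in the second (z) variable. -/
def gradZ (F : En n × En m → ℝ) (p : En n × En m) : En m :=
  gradient (fun z => F (p.1, z)) p.2

/-- The saddle-point vector field `X_sp = (-∇ₓF, ∇_zF)`. -/
def Xsp (F : En n × En m → ℝ) (p : En n × En m) : En n × En m :=
  (-gradX F p, gradZ F p)

/-- A trajectory of the saddle-point dynamics, defined on `[0,∞)`. -/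
def IsTrajectory (F : En n × En m → ℝ) (φ : ℝ → En n × En m) : Prop :=
  ∀ t : ℝ, 0 ≤ t → HasDerivAt φ (Xsp F (φ t)) t

/-- `p` is a (local min-max) saddle point of `F`. -/
def IsSaddlePoint (F : En n × En m → ℝ) (p : En n × En m) : Prop :=
  ∃ U : Set (En n), ∃ W : Set (En m),
    IsOpen U ∧ IsOpen W ∧ p.1 ∈ U ∧ p.2 ∈ W ∧
    ∀ x ∈ U, ∀ z ∈ W, F (p.1, z) ≤ F p ∧ F p ≤ F (x, p.2)

/-- The set of saddle points of `F`. -/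
def SaddleSet (F : En n × En m → ℝ) : Set (En n × En m) :=
  {p | IsSaddlePoint F p}

/-- A point `p` is stable for the saddle-point dynamics of `F`. -/
def StablePt (F : En n × En m → ℝ) (p : En n × En m) : Prop :=
  ∀ ε > 0, ∃ δ > 0, ∀ φ : ℝ → En n × En m, IsTrajectory F φ →
    dist (φ 0) p < δ → ∀ t : ℝ, 0 ≤ t → dist (φ t) p < ε

/-- `S` is an isolated path connected component of `T`. -/
def IsIsolatedPathComponent (S T : Set (En n × En m)) : Prop :=
  S ⊆ T ∧ (∀ a ∈ S, ∀ b ∈ S, JoinedIn S a b) ∧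
    ∃ U : Set (En n × En m), IsOpen U ∧ S ⊆ U ∧ U ∩ T = S

/-- `F` is locally convex-concave at `p`. -/
def LocallyConvexConcaveAt (F : En n × En m → ℝ) (p : En n × En m) : Prop :=
  ∃ U : Set (En n × En m), IsOpen U ∧ p ∈ U ∧
    ∀ q ∈ U, ConvexOn ℝ {x : En n | (x, q.2) ∈ U} (fun x => F (x, q.2)) ∧
      ConcaveOn ℝ {z : En m | (q.1, z) ∈ U} (fun z => F (q.1, z))

/-- `F` is locally strictly convex-concave at `p`. -/
def LocallyStrictlyConvexConcaveAt (F : En n × En m → ℝ) (p : En n × En m) : Prop :=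
  LocallyConvexConcaveAt F p ∧
    ((∃ r > 0, StrictConvexOn ℝ (ball p.1 r) (fun x => F (x, p.2))) ∨
      (∃ r > 0, StrictConcaveOn ℝ (ball p.2 r) (fun z => F (p.1, z))))

/-- A function `f` is strongly quasiconvex with parameter `s > 0` on a convex set `D`. -/
def StronglyQuasiconvexOn {X : Type*} [NormedAddCommGroup X] [NormedSpace ℝ X]
    (s : ℝ) (D : Set X) (f : X → ℝ) : Prop :=
  Convex ℝ D ∧ ∀ x ∈ D, ∀ y ∈ D, ∀ lam ∈ Icc (0 : ℝ) 1,
    s * lam * (1 - lam) * ‖x - y‖ ^ 2 ≤ max (f x) (f y) - f (lam • x + (1 - lam) • y)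

/-- The mixed second derivative map `(x,z) ↦ ∇ₓ_z F (x,z)`. -/
def mixedXZ (F : En n × En m → ℝ) (p : En n × En m) : En m →L[ℝ] En n :=
  fderiv ℝ (fun z => gradX F (p.1, z)) p.2

/-!
With `A` the constant mixed derivative, the partial gradients at different base points differ only
by `A` and its adjoint, so in `⟪∇ₓF(q), q.1 - p.1⟫ - ⟪∇_zF(q), q.2 - p.2⟫` the interaction terms
cancel. What remains are the gradients of the two slices through the saddle point `p`, and strong
quasiconvexity bounds each contribution below by `s` times a squared norm. Hence the squared
Euclidean distance to `p` decays like `exp (-2 s t)` along every trajectory.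
-/

namespace StronglyQuasiconvexOn

variable {X : Type*} [NormedAddCommGroup X] [NormedSpace ℝ X] {s : ℝ} {D : Set X} {f : X → ℝ}
  {x y : X}

lemma apply_lineMap_add_le (hf : StronglyQuasiconvexOn s D f) (hx : x ∈ D) (hy : y ∈ D)
    (hyx : f y ≤ f x) {l : ℝ} (hl : l ∈ Icc (0 : ℝ) 1) :
    f (AffineMap.lineMap x y l) + s * l * (1 - l) * ‖x - y‖ ^ 2 ≤ f x := by
  have h := hf.2 y hy x hx l hl
  rw [max_eq_right hyx, norm_sub_rev, add_comm (l • y), ← AffineMap.lineMap_apply_module] at h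
  linarith

lemma isMinOn_of_isLocalMinOn (hs : 0 < s) (hf : StronglyQuasiconvexOn s D f) (hx : x ∈ D)
    (hmin : IsLocalMinOn f D x) : IsMinOn f D x := by
  intro y hy
  by_contra hxy
  have hyx : f y < f x := not_le.1 hxy
  have hpos : 0 < ‖x - y‖ := norm_pos_iff.2 (sub_ne_zero.2 (ne_of_apply_ne f hyx.ne'))
  have hline : Tendsto (AffineMap.lineMap x y : ℝ → X) (𝓝[Ioo 0 1] 0) (𝓝[D] x) := by
    refine tendsto_nhdsWithin_iff.2 ⟨?_, ?_⟩
    · have h : Continuous (AffineMap.lineMap x y : ℝ → X) := AffineMap.lineMap_continuous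
      simpa only [AffineMap.lineMap_apply_zero] using (h.tendsto 0).mono_left nhdsWithin_le_nhds
    · filter_upwards [self_mem_nhdsWithin] with l hl
      exact hf.1.lineMap_mem hx hy (Ioo_subset_Icc_self hl)
  have : (𝓝[Ioo (0 : ℝ) 1] 0).NeBot := left_nhdsWithin_Ioo_neBot one_pos
  obtain ⟨l, hle, hl⟩ := ((hline.eventually hmin).and self_mem_nhdsWithin).exists
  have hquad : 0 < s * l * (1 - l) * ‖x - y‖ ^ 2 :=
    mul_pos (mul_pos (mul_pos hs hl.1) (sub_pos.2 hl.2)) (pow_pos hpos 2)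
  linarith [hf.apply_lineMap_add_le hx hy hyx.le (Ioo_subset_Icc_self hl)]

lemma mul_sq_norm_sub_le_of_hasFDerivWithinAt (hf : StronglyQuasiconvexOn s D f) (hx : x ∈ D)
    (hy : y ∈ D) (hyx : f y ≤ f x) {f' : X →L[ℝ] ℝ} (hf' : HasFDerivWithinAt f f' D x) :
    s * ‖x - y‖ ^ 2 ≤ f' (x - y) := by
  let h : ℝ → ℝ := fun l ↦ f (AffineMap.lineMap x y l) + s * l * (1 - l) * ‖x - y‖ ^ 2
  have hmax : IsMaxOn h (Icc 0 1) 0 := fun l hl ↦ by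
    simpa [h] using hf.apply_lineMap_add_le hx hy hyx hl
  have hslope : HasDerivWithinAt (fun l : ℝ ↦ f (AffineMap.lineMap x y l)) (f' (y - x))
      (Icc 0 1) 0 :=
    HasFDerivWithinAt.comp_hasDerivWithinAt (t := D) 0
      (by simpa only [AffineMap.lineMap_apply_zero] using hf')
      AffineMap.hasDerivWithinAt_lineMap fun l hl ↦ hf.1.lineMap_mem hx hy hl
  have hquad : HasDerivAt (fun l : ℝ ↦ s * l * (1 - l) * ‖x - y‖ ^ 2) (s * ‖x - y‖ ^ 2) 0 := by
    simpa using ((((hasDerivAt_id (0 : ℝ)).const_mul s).mul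
      ((hasDerivAt_id (0 : ℝ)).const_sub 1)).mul_const (‖x - y‖ ^ 2))
  have hderiv : HasDerivWithinAt h (f' (y - x) + s * ‖x - y‖ ^ 2) (Icc 0 1) 0 :=
    hslope.add hquad.hasDerivWithinAt
  have hcone : (1 : ℝ) ∈ posTangentConeAt (Icc 0 1) 0 :=
    mem_posTangentConeAt_of_segment_subset (by simp [segment_eq_Icc])
  have hnonpos : f' (y - x) + s * ‖x - y‖ ^ 2 ≤ 0 := by
    simpa using hmax.localize.hasFDerivWithinAt_nonpos hderiv.hasFDerivWithinAt hcone
  rw [← neg_sub, map_neg] at hnonpos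
  linarith

lemma mul_sq_norm_sub_le_of_isLocalMin (hs : 0 < s) (hf : StronglyQuasiconvexOn s univ f)
    (hmin : IsLocalMin f y) {f' : X →L[ℝ] ℝ} (hf' : HasFDerivAt f f' x) :
    s * ‖x - y‖ ^ 2 ≤ f' (x - y) :=
  hf.mul_sq_norm_sub_le_of_hasFDerivWithinAt trivial trivial
    (hf.isMinOn_of_isLocalMinOn hs trivial (hmin.on univ) trivial) hf'.hasFDerivWithinAt

end StronglyQuasiconvexOn

lemma sub_eq_apply_sub_of_forall_hasFDerivAt {𝕜 E G : Type*} [RCLike 𝕜] [NormedAddCommGroup E]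
    [NormedSpace 𝕜 E] [NormedAddCommGroup G] [NormedSpace 𝕜 G] {f : E → G} {A : E →L[𝕜] G}
    (hf : ∀ x, HasFDerivAt f A x) (x y : E) : f x - f y = A (x - y) := by
  have hzero (v : E) : HasFDerivAt (fun w ↦ f w - A w) (0 : E →L[𝕜] G) v := by
    simpa only [sub_self] using (hf v).fun_sub A.hasFDerivAt
  have hconst := is_const_of_fderiv_eq_zero (𝕜 := 𝕜) (fun v ↦ (hzero v).differentiableAt)
    (fun v ↦ (hzero v).fderiv) x y
  rw [map_sub]
  exact sub_eq_sub_iff_sub_eq_sub.1 hconst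

lemma le_mul_exp_of_hasDerivAt_le {E E' : ℝ → ℝ} {K : ℝ}
    (hE : ∀ t, 0 ≤ t → HasDerivAt E (E' t) t) (hle : ∀ t, 0 ≤ t → E' t ≤ K * E t)
    {t : ℝ} (ht : 0 ≤ t) : E t ≤ E 0 * Real.exp (K * t) := by
  have h := le_gronwallBound_of_liminf_deriv_right_le (ε := 0) (a := 0) (b := t)
    (fun r hr ↦ (hE r hr.1).continuousAt.continuousWithinAt)
    (fun r hr _ hlt ↦ (hE r hr.1).hasDerivWithinAt.liminf_right_slope_le hlt) le_rfl
    (fun r hr ↦ by simpa only [add_zero] using hle r hr.1) t ⟨ht, le_rfl⟩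
  rwa [gronwallBound_ε0, sub_zero] at h

lemma tendsto_of_dist_le_mul_exp_neg {M : Type*} [PseudoMetricSpace M] {φ : ℝ → M} {p : M}
    {C s : ℝ} (hs : 0 < s) (hφ : ∀ t, 0 ≤ t → dist (φ t) p ≤ C * Real.exp (-(s * t))) :
    Tendsto φ atTop (𝓝 p) := by
  have hexp : Tendsto (fun t : ℝ ↦ C * Real.exp (-(s * t))) atTop (𝓝 0) := by
    simpa only [mul_zero, Function.comp_def, id] using (Real.tendsto_exp_neg_atTop_nhds_zero.comp
      (tendsto_id.const_mul_atTop hs)).const_mul C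
  exact tendsto_iff_dist_tendsto_zero.2 <|
    squeeze_zero' (.of_forall fun _ ↦ dist_nonneg) ((eventually_ge_atTop 0).mono hφ) hexp

/-- The squared Euclidean distance between two points of a product, which serves as the Lyapunov
function; the metric of the type `X × Z` itself is the maximum of the two distances. -/
def sqDist {X Z : Type*} [NormedAddCommGroup X] [NormedAddCommGroup Z] (q p : X × Z) : ℝ :=
  ‖q.1 - p.1‖ ^ 2 + ‖q.2 - p.2‖ ^ 2

section sqDist

variable {X Z : Type*} [NormedAddCommGroup X] [NormedAddCommGroup Z]

lemma sq_dist_le_sqDist (q p : X × Z) : dist q p ^ 2 ≤ sqDist q p := by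
  rw [Prod.dist_eq, dist_eq_norm, dist_eq_norm, sqDist]
  rcases max_choice ‖q.1 - p.1‖ ‖q.2 - p.2‖ with h | h <;> rw [h]
  · exact le_add_of_nonneg_right (sq_nonneg _)
  · exact le_add_of_nonneg_left (sq_nonneg _)

lemma sqDist_le_two_mul_sq_dist (q p : X × Z) : sqDist q p ≤ 2 * dist q p ^ 2 := by
  have hfst : ‖q.1 - p.1‖ ≤ dist q p := by
    rw [← dist_eq_norm]; exact le_max_left _ _
  have hsnd : ‖q.2 - p.2‖ ≤ dist q p := by
    rw [← dist_eq_norm]; exact le_max_right _ _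
  rw [sqDist, two_mul]
  gcongr

end sqDist

section Hilbert

open InnerProductSpace

variable {X Z : Type*} [NormedAddCommGroup X] [InnerProductSpace ℝ X]
  [NormedAddCommGroup Z] [InnerProductSpace ℝ Z]

/-- `φ` solves the descent-ascent dynamics `ẋ = -gx`, `ż = gz` on `[0,∞)`; here `gx` and `gz` stand
for the partial gradients of a function on `X × Z`. -/
def IsDescentAscent (gx : X × Z → X) (gz : X × Z → Z) (φ : ℝ → X × Z) : Prop :=
  ∀ t : ℝ, 0 ≤ t → HasDerivAt φ (-gx (φ t), gz (φ t)) t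

lemma IsDescentAscent.hasDerivAt_sqDist {gx : X × Z → X} {gz : X × Z → Z} {φ : ℝ → X × Z}
    (hφ : IsDescentAscent gx gz φ) (p : X × Z) {t : ℝ} (ht : 0 ≤ t) :
    HasDerivAt (fun r ↦ sqDist (φ r) p)
      (-2 * (⟪gx (φ t), (φ t).1 - p.1⟫_ℝ - ⟪gz (φ t), (φ t).2 - p.2⟫_ℝ)) t := by
  have hfst : HasDerivAt (fun r ↦ (φ r).1) (-gx (φ t)) t := (hφ t ht).fst
  have hsnd : HasDerivAt (fun r ↦ (φ r).2) (gz (φ t)) t := (hφ t ht).snd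
  refine ((hfst.sub_const p.1).norm_sq.add (hsnd.sub_const p.2).norm_sq).congr_deriv ?_
  rw [inner_neg_right, real_inner_comm, real_inner_comm (gz (φ t))]
  ring

lemma hasGradientAt_snd [CompleteSpace Z] {F : X × Z → ℝ} {p : X × Z}
    (hF : DifferentiableAt ℝ F p) :
    HasGradientAt (fun z ↦ F (p.1, z)) (gradient (fun z ↦ F (p.1, z)) p.2) p.2 :=
  DifferentiableAt.hasGradientAt (hF.comp p.2 (by fun_prop : DifferentiableAt ℝ (p.1, ·) p.2))

variable [CompleteSpace X]

lemma hasGradientAt_fst {F : X × Z → ℝ} {p : X × Z} (hF : DifferentiableAt ℝ F p) :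
    HasGradientAt (fun x ↦ F (x, p.2)) (gradient (fun x ↦ F (x, p.2)) p.1) p.1 :=
  DifferentiableAt.hasGradientAt (hF.comp p.1 (by fun_prop : DifferentiableAt ℝ (·, p.2) p.1))

lemma gradient_fst_eq_toDual_symm {F : X × Z → ℝ} {p : X × Z} (hF : DifferentiableAt ℝ F p) :
    gradient (fun x ↦ F (x, p.2)) p.1 =
      (toDual ℝ X).symm ((fderiv ℝ F p).comp (ContinuousLinearMap.inl ℝ X Z)) :=
  (hF.hasFDerivAt.comp p.1 (hasFDerivAt_prodMk_left p.1 p.2)).hasGradientAt.gradient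

lemma contDiff_gradient_fst {F : X × Z → ℝ} {k : WithTop ℕ∞} (hF : ContDiff ℝ (k + 1) F) :
    ContDiff ℝ k (fun p : X × Z ↦ gradient (fun x ↦ F (x, p.2)) p.1) := by
  have hd : Differentiable ℝ F := hF.differentiable (by simp)
  simp only [gradient_fst_eq_toDual_symm (hd _)]
  exact (toDual ℝ X).symm.contDiff.comp ((hF.fderiv_right le_rfl).clm_comp contDiff_const)

lemma mixed_difference_eq_inner {F : X × Z → ℝ} {gx : X × Z → X} {A : Z →L[ℝ] X}
    (hgx : ∀ q : X × Z, HasGradientAt (fun x ↦ F (x, q.2)) (gx q) q.1)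
    (hA : ∀ q : X × Z, HasFDerivAt (fun z ↦ gx (q.1, z)) A q.2) (x y : X) (z w : Z) :
    F (x, z) - F (x, w) - (F (y, z) - F (y, w)) = ⟪A (z - w), x - y⟫_ℝ := by
  have hgrad (v : X) : gx (v, z) - gx (v, w) = A (z - w) :=
    sub_eq_apply_sub_of_forall_hasFDerivAt (f := fun u ↦ gx (v, u)) (fun u ↦ hA (v, u)) z w
  have hderiv (v : X) :
      HasFDerivAt (fun u ↦ F (u, z) - F (u, w)) (toDual ℝ X (A (z - w))) v := by
    rw [← hgrad v, map_sub]
    exact (hgx (v, z)).hasFDerivAt.fun_sub (hgx (v, w)).hasFDerivAt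
  exact sub_eq_apply_sub_of_forall_hasFDerivAt hderiv x y

variable [CompleteSpace Z] {F : X × Z → ℝ} {gx : X × Z → X} {gz : X × Z → Z} {A : Z →L[ℝ] X}
  {s : ℝ} {p : X × Z}

lemma gradient_snd_sub_eq_adjoint
    (hgx : ∀ q : X × Z, HasGradientAt (fun x ↦ F (x, q.2)) (gx q) q.1)
    (hgz : ∀ q : X × Z, HasGradientAt (fun z ↦ F (q.1, z)) (gz q) q.2)
    (hA : ∀ q : X × Z, HasFDerivAt (fun z ↦ gx (q.1, z)) A q.2) (x y : X) (z : Z) :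
    gz (x, z) - gz (y, z) = A.adjoint (x - y) := by
  have hdiff :
      HasFDerivAt (fun w ↦ F (x, w) - F (y, w)) (toDual ℝ Z (gz (x, z) - gz (y, z))) z := by
    rw [map_sub]
    exact (hgz (x, z)).hasFDerivAt.fun_sub (hgz (y, z)).hasFDerivAt
  have haffine (w : Z) :
      F (x, w) - F (y, w) = toDual ℝ Z (A.adjoint (x - y)) (w - z) + (F (x, z) - F (y, z)) := by
    rw [toDual_apply_apply, ContinuousLinearMap.adjoint_inner_left, real_inner_comm,
      ← mixed_difference_eq_inner hgx hA x y w z]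
    ring
  rw [funext haffine] at hdiff
  exact (toDual ℝ Z).injective <| hdiff.unique <|
    ((toDual ℝ Z (A.adjoint (x - y))).hasFDerivAt.comp z
      ((hasFDerivAt_id z).sub_const z)).add_const _

lemma mul_sqDist_le_inner_sub_inner
    (hgx : ∀ q : X × Z, HasGradientAt (fun x ↦ F (x, q.2)) (gx q) q.1)
    (hgz : ∀ q : X × Z, HasGradientAt (fun z ↦ F (q.1, z)) (gz q) q.2)
    (hA : ∀ q : X × Z, HasFDerivAt (fun z ↦ gx (q.1, z)) A q.2) (hs : 0 < s)
    (hx : StronglyQuasiconvexOn s univ (fun x ↦ F (x, p.2)))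
    (hz : StronglyQuasiconvexOn s univ (fun z ↦ -F (p.1, z)))
    (hmin : IsLocalMin (fun x ↦ F (x, p.2)) p.1) (hmax : IsLocalMax (fun z ↦ F (p.1, z)) p.2)
    (q : X × Z) :
    s * sqDist q p ≤ ⟪gx q, q.1 - p.1⟫_ℝ - ⟪gz q, q.2 - p.2⟫_ℝ := by
  have hfst : s * ‖q.1 - p.1‖ ^ 2 ≤ ⟪gx (q.1, p.2), q.1 - p.1⟫_ℝ :=
    hx.mul_sq_norm_sub_le_of_isLocalMin hs hmin (hgx (q.1, p.2)).hasFDerivAt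
  have hsnd : s * ‖q.2 - p.2‖ ^ 2 ≤ -⟪gz (p.1, q.2), q.2 - p.2⟫_ℝ :=
    hz.mul_sq_norm_sub_le_of_isLocalMin hs hmax.neg (hgz (p.1, q.2)).hasFDerivAt.fun_neg
  have hgx_eq : gx q = gx (q.1, p.2) + A (q.2 - p.2) :=
    eq_add_of_sub_eq' <| sub_eq_apply_sub_of_forall_hasFDerivAt (f := fun w ↦ gx (q.1, w))
      (fun w ↦ hA (q.1, w)) q.2 p.2
  have hgz_eq : gz q = gz (p.1, q.2) + A.adjoint (q.1 - p.1) :=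
    eq_add_of_sub_eq' (gradient_snd_sub_eq_adjoint hgx hgz hA q.1 p.1 q.2)
  have hcancel : ⟪A.adjoint (q.1 - p.1), q.2 - p.2⟫_ℝ = ⟪A (q.2 - p.2), q.1 - p.1⟫_ℝ := by
    rw [ContinuousLinearMap.adjoint_inner_left, real_inner_comm]
  rw [hgx_eq, hgz_eq, inner_add_left, inner_add_left, hcancel, sqDist]
  linarith

lemma IsDescentAscent.dist_le_mul_exp
    (hgx : ∀ q : X × Z, HasGradientAt (fun x ↦ F (x, q.2)) (gx q) q.1)
    (hgz : ∀ q : X × Z, HasGradientAt (fun z ↦ F (q.1, z)) (gz q) q.2)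
    (hA : ∀ q : X × Z, HasFDerivAt (fun z ↦ gx (q.1, z)) A q.2) (hs : 0 < s)
    (hx : StronglyQuasiconvexOn s univ (fun x ↦ F (x, p.2)))
    (hz : StronglyQuasiconvexOn s univ (fun z ↦ -F (p.1, z)))
    (hmin : IsLocalMin (fun x ↦ F (x, p.2)) p.1) (hmax : IsLocalMax (fun z ↦ F (p.1, z)) p.2)
    {φ : ℝ → X × Z} (hφ : IsDescentAscent gx gz φ) {t : ℝ} (ht : 0 ≤ t) :
    dist (φ t) p ≤ √2 * dist (φ 0) p * Real.exp (-(s * t)) := by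
  have hdecay : sqDist (φ t) p ≤ sqDist (φ 0) p * Real.exp (-(2 * s) * t) := by
    refine le_mul_exp_of_hasDerivAt_le (fun r hr ↦ hφ.hasDerivAt_sqDist p hr) (fun r _ ↦ ?_) ht
    linarith [mul_sqDist_le_inner_sub_inner hgx hgz hA hs hx hz hmin hmax (φ r)]
  refine le_of_sq_le_sq ?_ (by positivity)
  calc dist (φ t) p ^ 2
      ≤ sqDist (φ t) p := sq_dist_le_sqDist _ _
    _ ≤ sqDist (φ 0) p * Real.exp (-(2 * s) * t) := hdecay
    _ ≤ 2 * dist (φ 0) p ^ 2 * Real.exp (-(2 * s) * t) := by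
        gcongr
        exact sqDist_le_two_mul_sq_dist _ _
    _ = (√2 * dist (φ 0) p * Real.exp (-(s * t))) ^ 2 := by
        rw [mul_pow, mul_pow, Real.sq_sqrt zero_le_two, ← Real.exp_nat_mul]
        congr 2
        push_cast
        ring

theorem stmt_5_general
    (hgx : ∀ q : X × Z, HasGradientAt (fun x ↦ F (x, q.2)) (gx q) q.1)
    (hgz : ∀ q : X × Z, HasGradientAt (fun z ↦ F (q.1, z)) (gz q) q.2)
    (hA : ∀ q : X × Z, HasFDerivAt (fun z ↦ gx (q.1, z)) A q.2) (hs : 0 < s)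
    (hx : StronglyQuasiconvexOn s univ (fun x ↦ F (x, p.2)))
    (hz : StronglyQuasiconvexOn s univ (fun z ↦ -F (p.1, z)))
    (hmin : IsLocalMin (fun x ↦ F (x, p.2)) p.1) (hmax : IsLocalMax (fun z ↦ F (p.1, z)) p.2) :
    (∀ ε > 0, ∃ δ > 0, ∀ φ : ℝ → X × Z, IsDescentAscent gx gz φ →
      dist (φ 0) p < δ → ∀ t : ℝ, 0 ≤ t → dist (φ t) p < ε) ∧
    (∀ φ : ℝ → X × Z, IsDescentAscent gx gz φ → Tendsto φ atTop (𝓝 p)) := by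
  have hbound (φ : ℝ → X × Z) (hφ : IsDescentAscent gx gz φ) (t : ℝ) (ht : 0 ≤ t) :
      dist (φ t) p ≤ √2 * dist (φ 0) p * Real.exp (-(s * t)) :=
    hφ.dist_le_mul_exp hgx hgz hA hs hx hz hmin hmax ht
  refine ⟨fun ε hε ↦ ⟨ε / √2, by positivity, fun φ hφ h₀ t ht ↦ ?_⟩,
    fun φ hφ ↦ tendsto_of_dist_le_mul_exp_neg hs (hbound φ hφ)⟩
  calc dist (φ t) p
      ≤ √2 * dist (φ 0) p * Real.exp (-(s * t)) := hbound φ hφ t ht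
    _ ≤ √2 * dist (φ 0) p := mul_le_of_le_one_right (by positivity)
        (Real.exp_le_one_iff.2 (neg_nonpos.2 (by positivity)))
    _ < ε := (lt_div_iff₀' (by positivity)).1 h₀

end Hilbert

lemma hasFDerivAt_mixedXZ {F : En n × En m → ℝ} (hF : ContDiff ℝ 2 F) (p : En n × En m) :
    HasFDerivAt (fun z ↦ gradX F (p.1, z)) (mixedXZ F p) p.2 :=
  have hgradX : ContDiff ℝ 1 (gradX F) := contDiff_gradient_fst hF
  ((hgradX.differentiable one_ne_zero).comp
    (by fun_prop : Differentiable ℝ (p.1, ·)) p.2).hasFDerivAt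

lemma IsSaddlePoint.isLocalMin {F : En n × En m → ℝ} {p : En n × En m} (hp : IsSaddlePoint F p) :
    IsLocalMin (fun x ↦ F (x, p.2)) p.1 := by
  obtain ⟨U, W, hU, -, hpU, hpW, h⟩ := hp
  filter_upwards [hU.mem_nhds hpU] with x hx using (h x hx p.2 hpW).2

lemma IsSaddlePoint.isLocalMax {F : En n × En m → ℝ} {p : En n × En m} (hp : IsSaddlePoint F p) :
    IsLocalMax (fun z ↦ F (p.1, z)) p.2 := by
  obtain ⟨U, W, -, hW, hpU, hpW, h⟩ := hp
  filter_upwards [hW.mem_nhds hpW] with z hz using (h p.1 hpU z hz).1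

/-- global asymptotic stability via strong
quasiconvexity-quasiconcavity. If `F` is `C²`, globally jointly strongly
quasiconvex-quasiconcave, with constant mixed second derivative `∇ₓ_z F` and nonempty saddle
set, then the saddle set is globally asymptotically stable and every trajectory converges to a
single saddle point. -/
theorem stmt_5 {n m : ℕ} (F : En n × En m → ℝ) (hF : ContDiff ℝ 2 F)
    (hne : (SaddleSet F).Nonempty)
    (hqcqc : ∃ s > (0 : ℝ), ∀ q : En n × En m,
      StronglyQuasiconvexOn s univ (fun x => F (x, q.2)) ∧
        StronglyQuasiconvexOn s univ (fun z => -F (q.1, z)))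
    (hconst : ∀ p q : En n × En m, mixedXZ F p = mixedXZ F q) :
    (∀ p ∈ SaddleSet F, StablePt F p) ∧
    (∀ φ : ℝ → En n × En m, IsTrajectory F φ →
      ∃ q ∈ SaddleSet F, Tendsto φ atTop (𝓝 q)) := by
  obtain ⟨s, hs, hqc⟩ := hqcqc
  obtain ⟨p₀, hp₀⟩ := hne
  have hd : Differentiable ℝ F := hF.differentiable two_ne_zero
  have hstable (p : En n × En m) (hp : p ∈ SaddleSet F) :
      StablePt F p ∧ ∀ φ, IsTrajectory F φ → Tendsto φ atTop (𝓝 p) :=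
    stmt_5_general (A := mixedXZ F p)
      (fun q ↦ hasGradientAt_fst (hd q)) (fun q ↦ hasGradientAt_snd (hd q))
      (fun q ↦ hconst q p ▸ hasFDerivAt_mixedXZ hF q) hs (hqc p).1 (hqc p).2
      hp.isLocalMin hp.isLocalMax
  exact ⟨fun p hp ↦ (hstable p hp).1, fun φ hφ ↦ ⟨p₀, hp₀, (hstable p₀ hp₀).2 φ hφ⟩⟩
end
end

section
/- Let A ∈ ℝ^{n×n} be symmetric negative semidefinite and B ∈ ℝ^{n×m}, and suppose range(B) ∩ null(A) = {0}. Then the block matrix M = [[A, B], [−Bᵀ, 0]] ∈ ℝ^{(n+m)×(n+m)} has no purely imaginary nonzero eigenvalues; that is, whenever iλ with λ ∈ ℝ, λ ≠ 0, is an eigenvalue of M (viewed as a complex matrix), a contradiction follows. (In the paper this is applied with A = −∇ₓₓF(x*,z*) and B = −∇_zₓF(x*,z*) at a saddle point (x*,z*) of a C² function F that is linear in its second argument, giving: the Jacobian of the saddle-point dynamics at (x*,z*) has no eigenvalues on the imaginary axis except 0, provided range(∇_zₓF(x*,z*)) ∩ null(∇ₓₓF(x*,z*)) = {0}.) -/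
open Matrix

/-!
Let `(x, y)` be an eigenvector of `[[A, B], [-Bᴴ, 0]]` with eigenvalue `μ ∈ iℝ`. Pairing the first
row with `x` and substituting the second one gives `x* A x = μ (x* x - y* y)`. The left side is
real and the right side imaginary, so `x* A x = 0`, and semidefiniteness gives `A x = 0`. Now
`μ x = B y` lies in `range B ∩ ker A`, so `x = 0` if `μ ≠ 0`, and then `μ y = -Bᴴ x = 0`.

A pair of real matrices is complexified by writing each hypothesis as a matrix identity, which
survives any extension of scalars: `-A = Cᴴ C`, and `C A B = B` for some `C`.
-/

section BaseChange

variable {l m n : Type*} [Fintype m] [Fintype n]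

theorem disjoint_range_ker_iff_exists_mul_mul_eq [Fintype l] {K : Type*} [Field K]
    {A : Matrix l n K} {B : Matrix n m K} :
    Disjoint (LinearMap.range B.mulVecLin) (LinearMap.ker A.mulVecLin) ↔
      ∃ C : Matrix n l K, C * A * B = B := by
  classical
  constructor
  · intro hdisj
    have hinj : Function.Injective (A.mulVecLin.domRestrict (LinearMap.range B.mulVecLin)) :=
      Set.injOn_iff_injective.1 (LinearMap.disjoint_ker_iff_injOn.1 hdisj)
    obtain ⟨g, hg⟩ := LinearMap.exists_leftInverse_of_injective _ (LinearMap.ker_eq_bot.2 hinj)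
    refine ⟨LinearMap.toMatrix' ((LinearMap.range B.mulVecLin).subtype ∘ₗ g), ?_⟩
    refine Matrix.ext_of_mulVec_single fun i => ?_
    rw [← mulVec_mulVec, ← mulVec_mulVec, LinearMap.toMatrix'_mulVec]
    exact congrArg Subtype.val (LinearMap.congr_fun hg ⟨B *ᵥ Pi.single i 1, Pi.single i 1, rfl⟩)
  · rintro ⟨C, hC⟩
    rw [LinearMap.disjoint_ker]
    rintro _ ⟨w, rfl⟩ hw
    simp only [mulVecLin_apply] at hw ⊢
    rw [← hC, ← mulVec_mulVec, ← mulVec_mulVec, hw, mulVec_zero]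

theorem disjoint_range_ker_map [Finite l] {K L : Type*} [Field K] [Field L] (f : K →+* L)
    {A : Matrix l n K} {B : Matrix n m K}
    (hdisj : Disjoint (LinearMap.range B.mulVecLin) (LinearMap.ker A.mulVecLin)) :
    Disjoint (LinearMap.range (B.map f).mulVecLin) (LinearMap.ker (A.map f).mulVecLin) := by
  cases nonempty_fintype l
  obtain ⟨C, hC⟩ := disjoint_range_ker_iff_exists_mul_mul_eq.1 hdisj
  refine disjoint_range_ker_iff_exists_mul_mul_eq.2 ⟨C.map f, ?_⟩
  rw [← Matrix.map_mul, ← Matrix.map_mul, hC]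

open scoped ComplexOrder MatrixOrder in
theorem posSemidef_map {ι 𝕜 R : Type*} [Finite ι] [RCLike 𝕜] [CommRing R] [PartialOrder R]
    [StarRing R] [StarOrderedRing R] (f : 𝕜 →+* R) (hf : Function.Semiconj f star star)
    {A : Matrix ι ι 𝕜} (hA : A.PosSemidef) : (A.map f).PosSemidef := by
  classical
  cases nonempty_fintype ι
  obtain ⟨C, rfl⟩ := CStarAlgebra.nonneg_iff_eq_star_mul_self.mp hA.nonneg
  rw [star_eq_conjTranspose, Matrix.map_mul, conjTranspose_map f hf]
  exact posSemidef_conjTranspose_mul_self _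

theorem map_fromBlocks_neg_conjTranspose_zero {ι κ R S : Type*} [Ring R] [Star R] [Ring S]
    [Star S] (f : R →+* S) (hf : Function.Semiconj f star star) (A : Matrix ι ι R)
    (B : Matrix ι κ R) :
    (fromBlocks A B (-Bᴴ) 0).map f = fromBlocks (A.map f) (B.map f) (-(B.map f)ᴴ) 0 := by
  rw [fromBlocks_map, Matrix.map_neg _ (map_neg f), conjTranspose_map _ hf,
    Matrix.map_zero _ (map_zero f)]

end BaseChange

section Eigenvector

variable {m n : Type*} [Fintype m] [Fintype n]

theorem mem_spectrum_iff_exists_mulVec_eq_smul {K : Type*} [Field K] [DecidableEq n]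
    {M : Matrix n n K} {μ : K} : μ ∈ spectrum K M ↔ ∃ v ≠ 0, M *ᵥ v = μ • v := by
  rw [← spectrum_toLin', ← Module.End.hasEigenvalue_iff_mem_spectrum,
    Module.End.HasEigenvalue, Module.End.HasUnifEigenvalue, Submodule.ne_bot_iff]
  simp only [Module.End.mem_genEigenspace_one, toLin'_apply, and_comm]

theorem star_dotProduct_mulVec_eq_zero_of_star_eq_neg {R : Type*} [CommRing R] [StarRing R]
    [IsAddTorsionFree R] {A : Matrix n n R} {B : Matrix n m R} {μ : R} {x : n → R} {y : m → R}
    (hA : A.IsHermitian) (hμ : star μ = -μ) (hx : A *ᵥ x + B *ᵥ y = μ • x)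
    (hy : -(Bᴴ *ᵥ x) = μ • y) : star x ⬝ᵥ A *ᵥ x = 0 := by
  have hBy : star x ⬝ᵥ B *ᵥ y = μ * (star y ⬝ᵥ y) := by
    rw [neg_eq_iff_eq_neg] at hy
    rw [dotProduct_mulVec, ← conjTranspose_conjTranspose B, ← star_mulVec, hy, star_neg, star_smul,
      hμ, neg_smul, neg_neg, smul_dotProduct, smul_eq_mul]
  have hAx : star x ⬝ᵥ A *ᵥ x = μ * (star x ⬝ᵥ x - star y ⬝ᵥ y) := by
    rw [eq_sub_of_add_eq hx, dotProduct_sub, hBy, dotProduct_smul, smul_eq_mul, mul_sub]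
  have hself : star (star x ⬝ᵥ A *ᵥ x) = star x ⬝ᵥ A *ᵥ x := by
    rw [← star_dotProduct, star_mulVec, hA.eq, dotProduct_mulVec]
  have hskew : star (star x ⬝ᵥ A *ᵥ x) = -(star x ⬝ᵥ A *ᵥ x) := by
    rw [hAx, star_mul', hμ, star_sub, ← star_dotProduct, ← star_dotProduct, neg_mul]
  exact self_eq_neg.1 (hself.symm.trans hskew)

open scoped ComplexOrder in
theorem stmt_8_general [DecidableEq m] [DecidableEq n] {A : Matrix n n ℂ} {B : Matrix n m ℂ}
    (hA : (-A).PosSemidef)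
    (hdisj : Disjoint (LinearMap.range B.mulVecLin) (LinearMap.ker A.mulVecLin))
    {μ : ℂ} (hre : μ.re = 0) (hμ : μ ≠ 0) :
    μ ∉ spectrum ℂ (fromBlocks A B (-Bᴴ) 0) := by
  rw [mem_spectrum_iff_exists_mulVec_eq_smul]
  rintro ⟨v, hv, hMv⟩
  obtain ⟨x, y, rfl⟩ : ∃ x y, v = Sum.elim x y := ⟨_, _, (Sum.elim_comp_inl_inr v).symm⟩
  obtain ⟨hx, hy⟩ : A *ᵥ x + B *ᵥ y = μ • x ∧ -(Bᴴ *ᵥ x) = μ • y := by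
    rw [fromBlocks_mulVec, zero_mulVec, add_zero, neg_mulVec] at hMv
    exact ⟨congrArg (· ∘ Sum.inl) hMv, congrArg (· ∘ Sum.inr) hMv⟩
  have hAx : A *ᵥ x = 0 := by
    have hquad : star x ⬝ᵥ A *ᵥ x = 0 :=
      star_dotProduct_mulVec_eq_zero_of_star_eq_neg (neg_neg A ▸ hA.isHermitian.neg)
        (Complex.ext (by simp [hre]) (by simp)) hx hy
    simpa [neg_mulVec, hquad] using hA.dotProduct_mulVec_zero_iff x
  have hx_range : x ∈ LinearMap.range B.mulVecLin := by
    refine ⟨μ⁻¹ • y, ?_⟩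
    rw [hAx, zero_add] at hx
    rw [mulVecLin_apply, mulVec_smul, hx, inv_smul_smul₀ hμ]
  have hx0 : x = 0 := Submodule.disjoint_def.1 hdisj x hx_range hAx
  have hy0 : y = 0 := by
    rw [hx0, mulVec_zero, neg_zero] at hy
    exact (smul_eq_zero.1 hy.symm).resolve_left hμ
  exact hv (by rw [hx0, hy0, Sum.elim_zero_zero])

end Eigenvector

/-- If `A ∈ ℝ^{n×n}` is symmetric negative semidefinite, `B ∈ ℝ^{n×m}`,
and `range B ∩ null A = {0}`, then the block matrix `M = [[A, B], [-Bᵀ, 0]]` has no purely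
imaginary nonzero eigenvalues (over `ℂ`). -/
theorem stmt_8 {n m : ℕ} (A : Matrix (Fin n) (Fin n) ℝ) (B : Matrix (Fin n) (Fin m) ℝ)
    (hAsymm : A.IsSymm) (hANSD : (-A).PosSemidef)
    (hrange : LinearMap.range B.mulVecLin ⊓ LinearMap.ker A.mulVecLin = ⊥) :
    ∀ lam : ℝ, lam ≠ 0 →
      (lam : ℂ) * Complex.I ∉
        spectrum ℂ ((Matrix.fromBlocks A B (-Bᵀ) (0 : Matrix (Fin m) (Fin m) ℝ)).map
          (Complex.ofReal)) := by
  intro lam hlam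
  have hstar : Function.Semiconj Complex.ofRealHom star star :=
    fun r => (Complex.conj_ofReal r).symm
  open scoped ComplexOrder in
  have hpsd : (-A.map Complex.ofRealHom).PosSemidef :=
    Matrix.map_neg _ (map_neg Complex.ofRealHom) A ▸ posSemidef_map _ hstar hANSD
  have hdisj := disjoint_range_ker_map Complex.ofRealHom (disjoint_iff.2 hrange)
  rw [← conjTranspose_eq_transpose_of_trivial]
  exact map_fromBlocks_neg_conjTranspose_zero _ hstar A B ▸
    stmt_8_general hpsd hdisj (by simp) (by simp [hlam])
end

section
/- Let F : ℝⁿ × ℝᵐ → ℝ be continuously differentiable and let S ⊂ Saddle(F) be a path connected subset of the set of saddle points. If F is locally convex-concave at every point of S, then F is constant on S. -/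
open Metric Filter Topology Set

noncomputable section

variable {n m : ℕ}

/-!
On a set `U` where `f` is convex-concave, convexity turns a local saddle point into a saddle point
along the whole horizontal and vertical slices of `U` through it. If `(a, b)` and `(a', b')` are two
such points and the corners `(a', b)` and `(a, b')` lie in `U`, then
`f (a, b) ≤ f (a', b) ≤ f (a', b') ≤ f (a, b') ≤ f (a, b)`. The corners do lie in `U` when the two
points are close, so `f` is locally constant on `S`, hence constant by connectedness.
-/

section SaddlePoints

variable {X Z β : Type*}

theorem eq_of_isSaddlePointOn [PartialOrder β] {f : X → Z → β} {s s' : Set X} {t t' : Set Z}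
    {a a' : X} {b b' : Z} (h : IsSaddlePointOn s t f a b) (h' : IsSaddlePointOn s' t' f a' b')
    (ha : a ∈ s ∩ s') (ha' : a' ∈ s ∩ s') (hb : b ∈ t ∩ t') (hb' : b' ∈ t ∩ t') :
    f a b = f a' b' :=
  le_antisymm
    (calc
      f a b ≤ f a' b := h a' ha'.1 b hb.1
      _ ≤ f a' b' := h' a' ha'.2 b hb.2)
    (calc
      f a' b' ≤ f a b' := h' a ha.2 b' hb'.2
      _ ≤ f a b := h a ha.1 b' hb'.1)

/-- Local min-max saddle points: `p` is a local minimum in the first variable and a local maximum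
in the second. This extends `IsSaddlePoint` to arbitrary topological spaces. -/
def IsLocalSaddlePoint [TopologicalSpace X] [TopologicalSpace Z] [Preorder β]
    (f : X × Z → β) (p : X × Z) : Prop :=
  IsLocalMin (fun x => f (x, p.2)) p.1 ∧ IsLocalMax (fun z => f (p.1, z)) p.2

variable [AddCommGroup X] [Module ℝ X] [AddCommGroup Z] [Module ℝ Z]
  [AddCommGroup β] [PartialOrder β] [Module ℝ β]

/-- Convex-concave functions on a set `U`, which need not be a product: `f` is convex on the
horizontal slices of `U` and concave on its vertical slices. As in `ConvexOn`, these slices are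
required to be convex. -/
def ConvexConcaveOn (U : Set (X × Z)) (f : X × Z → β) : Prop :=
  ∀ q ∈ U, ConvexOn ℝ {x | (x, q.2) ∈ U} (fun x => f (x, q.2)) ∧
    ConcaveOn ℝ {z | (q.1, z) ∈ U} (fun z => f (q.1, z))

variable [TopologicalSpace X] [IsTopologicalAddGroup X] [ContinuousSMul ℝ X]
  [TopologicalSpace Z] [IsTopologicalAddGroup Z] [ContinuousSMul ℝ Z]
  [IsOrderedAddMonoid β] [IsOrderedModule ℝ β]
  {f : X × Z → β} {U : Set (X × Z)} {p q : X × Z}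

theorem ConvexConcaveOn.isSaddlePointOn (hf : ConvexConcaveOn U f) (hpU : p ∈ U)
    (hp : IsLocalSaddlePoint f p) :
    IsSaddlePointOn {x | (x, p.2) ∈ U} {z | (p.1, z) ∈ U} (Function.curry f) p.1 p.2 := by
  intro x hx z hz
  have min_slice : IsMinOn (fun x => f (x, p.2)) {x | (x, p.2) ∈ U} p.1 :=
    .of_isLocalMinOn_of_convexOn hpU (hp.1.on _) (hf p hpU).1
  have max_slice : IsMaxOn (fun z => f (p.1, z)) {z | (p.1, z) ∈ U} p.2 :=
    .of_isLocalMaxOn_of_concaveOn hpU (hp.2.on _) (hf p hpU).2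
  exact (max_slice hz).trans (min_slice hx)

theorem ConvexConcaveOn.eq_of_isLocalSaddlePoint (hf : ConvexConcaveOn U f)
    (hp : IsLocalSaddlePoint f p) (hq : IsLocalSaddlePoint f q) (hpU : p ∈ U) (hqU : q ∈ U)
    (hpq : (p.1, q.2) ∈ U) (hqp : (q.1, p.2) ∈ U) : f p = f q :=
  eq_of_isSaddlePointOn (hf.isSaddlePointOn hpU hp) (hf.isSaddlePointOn hqU hq)
    ⟨hpU, hpq⟩ ⟨hqp, hqU⟩ ⟨hpU, hqp⟩ ⟨hpq, hqU⟩

theorem ConvexConcaveOn.eventually_eq_of_isLocalSaddlePoint (hf : ConvexConcaveOn U f)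
    (hU : U ∈ 𝓝 p) (hp : IsLocalSaddlePoint f p) :
    ∀ᶠ q in 𝓝 p, IsLocalSaddlePoint f q → f p = f q := by
  have corner_left : ∀ᶠ q : X × Z in 𝓝 p, (p.1, q.2) ∈ U :=
    ContinuousAt.eventually_mem (f := fun q : X × Z => (p.1, q.2)) (by fun_prop) hU
  have corner_right : ∀ᶠ q : X × Z in 𝓝 p, (q.1, p.2) ∈ U :=
    ContinuousAt.eventually_mem (f := fun q : X × Z => (q.1, p.2)) (by fun_prop) hU
  filter_upwards [hU, corner_left, corner_right] with q hqU hpq hqp hq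
  exact hf.eq_of_isLocalSaddlePoint hp hq (mem_of_mem_nhds hU) hqU hpq hqp

theorem stmt_13_general {S : Set (X × Z)} (hS : IsPreconnected S)
    (hsaddle : ∀ p ∈ S, IsLocalSaddlePoint f p)
    (hcc : ∀ p ∈ S, ∃ U ∈ 𝓝 p, ConvexConcaveOn U f) :
    ∀ p ∈ S, ∀ q ∈ S, f p = f q := by
  have locally_const : ∀ p ∈ S, ∀ᶠ q in 𝓝[S] p, f p = f q := fun p hp => by
    obtain ⟨U, hU, hf⟩ := hcc p hp
    filter_upwards [self_mem_nhdsWithin, mem_nhdsWithin_of_mem_nhds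
      (hf.eventually_eq_of_isLocalSaddlePoint hU (hsaddle p hp))] with q hq heq
    exact heq (hsaddle q hq)
  intro p hp q hq
  exact hS.induction₂ (fun p q => f p = f q) locally_const
    (fun _ _ _ _ _ _ => Eq.trans) (fun _ _ _ _ => Eq.symm) hp hq

end SaddlePoints

theorem IsSaddlePoint.isLocalSaddlePoint {F : En n × En m → ℝ} {p : En n × En m}
    (h : IsSaddlePoint F p) : IsLocalSaddlePoint F p := by
  obtain ⟨U, W, hU, hW, hpU, hpW, hF⟩ := h
  exact ⟨mem_of_superset (hU.mem_nhds hpU) fun x hx => (hF x hx p.2 hpW).2,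
    mem_of_superset (hW.mem_nhds hpW) fun z hz => (hF p.1 hpU z hz).1⟩

theorem LocallyConvexConcaveAt.exists_convexConcaveOn {F : En n × En m → ℝ} {p : En n × En m}
    (h : LocallyConvexConcaveAt F p) : ∃ U ∈ 𝓝 p, ConvexConcaveOn U F :=
  let ⟨U, hU, hpU, hF⟩ := h
  ⟨U, hU.mem_nhds hpU, hF⟩

/-- constant function value over saddle points. If `F` is `C¹`,
`S ⊆ Saddle(F)` is path connected, and `F` is locally convex-concave at every point of `S`,
then `F` is constant on `S`. -/
theorem stmt_13 {n m : ℕ} (F : En n × En m → ℝ) (hF : ContDiff ℝ 1 F)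
    (S : Set (En n × En m)) (hSsub : S ⊆ SaddleSet F)
    (hpath : ∀ a ∈ S, ∀ b ∈ S, JoinedIn S a b)
    (hcc : ∀ p ∈ S, LocallyConvexConcaveAt F p) :
    ∀ p ∈ S, ∀ q ∈ S, F p = F q :=
  fun p hp =>
    stmt_13_general (isPathConnected_iff.2 ⟨⟨p, hp⟩, hpath⟩).isConnected.isPreconnected
      (fun _ h => (hSsub h).isLocalSaddlePoint) (fun q h => (hcc q h).exists_convexConcaveOn) p hp
end
end
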